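/- Let γ : I → ℝ be twice continuously differentiable with 1+γ(θ) > 0 for all θ ∈ I, and let ℘_γ : I → ℝ be the (unique) continuous function with 𝔽(γ, ℘_γ) = 0. Then there exist δ > 0 and η > 0 such that for every continuous ℘ : I → ℝ with sup_{θ∈I} |℘(θ) − ℘_γ(θ)| < δ there exists exactly one twice continuously differentiable h : I → ℝ satisfying h(π/2) = γ(π/2), h'(π/2) = γ'(π/2), sup_{θ∈I}(|h(θ)−γ(θ)| + |h'(θ)−γ'(θ)| + |h''(θ)−γ''(θ)|) < η, and 𝔽(h, ℘) = 0; moreover, the resulting map ℘ ↦ h sends ℘_γ to γ and is continuous from the supremum norm on C(I) to the C² norm. -/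

import Mathlib

/-- The equatorial strip `I = [π/2 − ε, π/2 + ε]` with `ε = 0.016`. -/
noncomputable def Istrip : Set ℝ :=
  Set.Icc (Real.pi / 2 - 0.016) (Real.pi / 2 + 0.016)

/-- The characteristic curve `s ↦ θ̄(s)`. -/
noncomputable def thetaBar (s : ℝ) : ℝ :=
  Real.arccos ((1 - Real.exp (2 * s)) / (1 + Real.exp (2 * s)))

/-- The function `f(θ) = ½·ln((1−cos θ)/(1+cos θ))`. -/
noncomputable def fChar (θ : ℝ) : ℝ :=
  (1 / 2) * Real.log ((1 - Real.cos θ) / (1 + Real.cos θ))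

/-- `𝓕(ξ,θ) = ∫₀^{f(θ)} g·ρ_θ(ξ·(e^s+e^{−s})/2, θ̄(s)) ds`. -/
noncomputable def calF (g : ℝ) (ρθ : ℝ → ℝ → ℝ) (ξ θ : ℝ) : ℝ :=
  ∫ s in (0:ℝ)..(fChar θ),
    g * ρθ (ξ * (Real.exp s + Real.exp (-s)) / 2) (thetaBar s)

/-- The nondimensionalized Bernoulli functional `𝔽(h,℘)(θ)`. -/
noncomputable def FF (g R σ Patm a b : ℝ) (ρ ρθ : ℝ → ℝ → ℝ) (F : ℝ → ℝ)
    (h ℘ : ℝ → ℝ) (θ : ℝ) : ℝ :=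
  -℘ θ - (g / Patm) * (∫ s in a..(R * (1 + h θ)), ρ s θ)
    + (1 / Patm) *
        (∫ s in (a * Real.sin θ)..(R * (1 + h θ) * Real.sin θ),
          (F s / s + calF g ρθ s θ))
    - (σ / (R * Patm)) *
        ((2 * (1 + h θ)^2 + 3 * (deriv h θ)^2) /
            (((1 + h θ)^2 + (deriv h θ)^2) ^ ((3:ℝ)/2))
          - deriv (deriv h) θ * (1 + h θ) /
            (((1 + h θ)^2 + (deriv h θ)^2) ^ ((3:ℝ)/2))
          - Real.cot θ * deriv h θ /
            ((1 + h θ) * (((1 + h θ)^2 + (deriv h θ)^2) ^ ((1:ℝ)/2))))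
    + (b / Patm + (1 / Patm) *
        ∫ s in (Real.pi / 2)..θ,
          (F (a * Real.sin s) * Real.cot s
            + calF g ρθ (a * Real.sin s) s * a * Real.cos s))

section auxiliary

open Set

theorem aux_stab_forward (c ε L e : ℝ) (hL : 0 ≤ L) (he : 0 ≤ e)
    (V : ℝ → ℝ → ℝ → ℝ)
    (hV : ∀ θ ∈ Icc c (c + ε), ∀ x y x' y',
      |V θ x y - V θ x' y'| ≤ L * (|x - x'| + |y - y'|))
    (x₁ y₁ x₂ y₂ z₁ z₂ : ℝ → ℝ)
    (hx₁ : ∀ θ, HasDerivAt x₁ (y₁ θ) θ) (hy₁ : ∀ θ, HasDerivAt y₁ (z₁ θ) θ)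
    (hx₂ : ∀ θ, HasDerivAt x₂ (y₂ θ) θ) (hy₂ : ∀ θ, HasDerivAt y₂ (z₂ θ) θ)
    (h0x : x₁ c = x₂ c) (h0y : y₁ c = y₂ c)
    (hz₁ : ∀ θ ∈ Icc c (c + ε), z₁ θ = V θ (x₁ θ) (y₁ θ))
    (hz₂ : ∀ θ ∈ Icc c (c + ε), |z₂ θ - V θ (x₂ θ) (y₂ θ)| ≤ e) :
    ∀ θ ∈ Icc c (c + ε), |x₁ θ - x₂ θ| ≤ Real.exp ((1 + 2 * L) * ε) * e ∧
      |y₁ θ - y₂ θ| ≤ Real.exp ((1 + 2 * L) * ε) * e := by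
  intro θ hθ
  have hKpos : (0:ℝ) < 1 + 2 * L := by linarith
  set K : NNReal := ⟨1 + 2 * L, hKpos.le⟩ with hK
  have hKc : (K : ℝ) = 1 + 2 * L := rfl
  have key := dist_le_of_approx_trajectories_ODE_of_mem (E := ℝ × ℝ)
    (v := fun t p => (p.2, V t p.1 p.2)) (K := K) (s := fun _ => univ)
    (f := fun t => (x₁ t, y₁ t)) (f' := fun t => (y₁ t, z₁ t))
    (g := fun t => (x₂ t, y₂ t)) (g' := fun t => (y₂ t, z₂ t))
    (a := c) (b := c + ε) (εf := 0) (εg := e) (δ := 0)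
    (by
      intro t ht
      refine LipschitzOnWith.of_dist_le_mul ?_
      rintro ⟨x, y⟩ - ⟨x', y'⟩ -
      have h1 := hV t (Ico_subset_Icc_self ht) x y x' y'
      simp only [Prod.dist_eq, Real.dist_eq, hKc]
      have h2 := le_max_left |x - x'| |y - y'|
      have h3 := le_max_right |x - x'| |y - y'|
      have h4 : 0 ≤ max |x - x'| |y - y'| := (abs_nonneg _).trans h2
      apply max_le
      · nlinarith
      · nlinarith)
    (by
      intro t _
      exact ((hx₁ t).continuousAt.prodMk (hy₁ t).continuousAt).continuousWithinAt)
    (fun t _ => ((hx₁ t).prodMk (hy₁ t)).hasDerivWithinAt)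
    (by
      intro t ht
      have := hz₁ t (Ico_subset_Icc_self ht)
      simp [this])
    (fun _ _ => trivial)
    (by
      intro t _
      exact ((hx₂ t).continuousAt.prodMk (hy₂ t).continuousAt).continuousWithinAt)
    (fun t _ => ((hx₂ t).prodMk (hy₂ t)).hasDerivWithinAt)
    (by
      intro t ht
      have := hz₂ t (Ico_subset_Icc_self ht)
      simp only [Prod.dist_eq, Real.dist_eq, sub_self, abs_zero]
      exact max_le he this)
    (fun _ _ => trivial)
    (by simp [h0x, h0y]) θ hθ
  rw [gronwallBound_of_K_ne_0 (by rw [hKc]; positivity)] at key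
  simp only [Prod.dist_eq, Real.dist_eq, hKc, zero_mul, zero_add] at key
  have hE : Real.exp ((1 + 2 * L) * (θ - c)) ≤ Real.exp ((1 + 2 * L) * ε) := by
    apply Real.exp_le_exp.2
    have := hθ.2
    nlinarith
  have hb : e / (1 + 2 * L) * (Real.exp ((1 + 2 * L) * (θ - c)) - 1) ≤
      Real.exp ((1 + 2 * L) * ε) * e := by
    have h1 : e / (1 + 2 * L) ≤ e := div_le_self he (by linarith)
    have h2 : 0 ≤ e / (1 + 2 * L) := by positivity
    have h3 := Real.exp_pos ((1 + 2 * L) * (θ - c))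
    nlinarith
  exact ⟨(le_max_left _ _).trans (key.trans hb), (le_max_right _ _).trans (key.trans hb)⟩

theorem aux_stab (c ε L e : ℝ) (hL : 0 ≤ L) (he : 0 ≤ e)
    (V : ℝ → ℝ → ℝ → ℝ)
    (hV : ∀ θ ∈ Icc (c - ε) (c + ε), ∀ x y x' y',
      |V θ x y - V θ x' y'| ≤ L * (|x - x'| + |y - y'|))
    (x₁ y₁ x₂ y₂ z₁ z₂ : ℝ → ℝ)
    (hx₁ : ∀ θ, HasDerivAt x₁ (y₁ θ) θ) (hy₁ : ∀ θ, HasDerivAt y₁ (z₁ θ) θ)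
    (hx₂ : ∀ θ, HasDerivAt x₂ (y₂ θ) θ) (hy₂ : ∀ θ, HasDerivAt y₂ (z₂ θ) θ)
    (h0x : x₁ c = x₂ c) (h0y : y₁ c = y₂ c)
    (hz₁ : ∀ θ ∈ Icc (c - ε) (c + ε), z₁ θ = V θ (x₁ θ) (y₁ θ))
    (hz₂ : ∀ θ ∈ Icc (c - ε) (c + ε), |z₂ θ - V θ (x₂ θ) (y₂ θ)| ≤ e) :
    ∀ θ ∈ Icc (c - ε) (c + ε), |x₁ θ - x₂ θ| ≤ Real.exp ((1 + 2 * L) * ε) * e ∧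
      |y₁ θ - y₂ θ| ≤ Real.exp ((1 + 2 * L) * ε) * e := by
  intro θ hθ
  have hsub : Icc c (c + ε) ⊆ Icc (c - ε) (c + ε) := by
    intro t ht
    exact ⟨by linarith [ht.1, ht.2], ht.2⟩
  rcases le_total c θ with h | h
  · exact aux_stab_forward c ε L e hL he V (fun t ht => hV t (hsub ht)) x₁ y₁ x₂ y₂ z₁ z₂
      hx₁ hy₁ hx₂ hy₂ h0x h0y (fun t ht => hz₁ t (hsub ht)) (fun t ht => hz₂ t (hsub ht))
      θ ⟨h, hθ.2⟩
  · have hrefl : ∀ t ∈ Icc c (c + ε), 2 * c - t ∈ Icc (c - ε) (c + ε) := by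
      intro t ht
      exact ⟨by linarith [ht.1, ht.2], by linarith [ht.1, ht.2]⟩
    have hd : ∀ (f f' : ℝ → ℝ), (∀ t, HasDerivAt f (f' t) t) →
        ∀ t, HasDerivAt (fun t => f (2 * c - t)) (-f' (2 * c - t)) t := by
      intro f f' hf t
      exact (hf (2 * c - t)).comp_const_sub (2 * c) t
    have key := aux_stab_forward c ε L e hL he (fun t x y => V (2 * c - t) x (-y))
      (fun t ht x y x' y' => by
        have := hV _ (hrefl t ht) x (-y) x' (-y')
        rwa [show -y - -y' = -(y - y') by ring, abs_neg] at this)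
      (fun t => x₁ (2 * c - t)) (fun t => -y₁ (2 * c - t))
      (fun t => x₂ (2 * c - t)) (fun t => -y₂ (2 * c - t))
      (fun t => z₁ (2 * c - t)) (fun t => z₂ (2 * c - t))
      (hd _ _ hx₁)
      (fun t => by
        have := (hd _ _ hy₁ t).fun_neg
        rwa [neg_neg] at this)
      (hd _ _ hx₂)
      (fun t => by
        have := (hd _ _ hy₂ t).fun_neg
        rwa [neg_neg] at this)
      (by simpa [two_mul] using h0x) (by simpa [two_mul] using h0y)
      (fun t ht => by simpa using hz₁ _ (hrefl t ht))
      (fun t ht => by simpa using hz₂ _ (hrefl t ht))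
      (2 * c - θ) ⟨by linarith, by linarith [hθ.1]⟩
    simp only [sub_sub_cancel] at key
    refine ⟨key.1, ?_⟩
    have := key.2
    rwa [show -y₁ θ - -y₂ θ = -(y₁ θ - y₂ θ) by ring, abs_neg] at this

/-- clipping to an interval -/
noncomputable def auxClip (lo hi x : ℝ) : ℝ := max lo (min hi x)

theorem auxClip_mem {lo hi : ℝ} (h : lo ≤ hi) (x : ℝ) : auxClip lo hi x ∈ Icc lo hi :=
  ⟨le_max_left _ _, max_le h (min_le_left _ _)⟩

theorem auxClip_of_mem {lo hi x : ℝ} (h : x ∈ Icc lo hi) : auxClip lo hi x = x := by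
  simp [auxClip, h.1, h.2]

theorem auxClip_continuous (lo hi : ℝ) : Continuous (auxClip lo hi) := by
  unfold auxClip; fun_prop

theorem auxClip_lip (lo hi x y : ℝ) : |auxClip lo hi x - auxClip lo hi y| ≤ |x - y| := by
  unfold auxClip
  refine (abs_max_sub_max_le_max _ _ _ _).trans ?_
  rw [sub_self, abs_zero, max_eq_right (abs_nonneg _)]
  refine (abs_min_sub_min_le_max _ _ _ _).trans ?_
  rw [sub_self, abs_zero, max_eq_right (abs_nonneg _)]

/-- Global existence for a bounded Lipschitz second order field. -/
theorem aux_exist (c ε L B : ℝ) (hε : 0 < ε) (hε1 : ε ≤ 1) (hL : 0 ≤ L) (hB : 0 ≤ B)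
    (V : ℝ → ℝ → ℝ → ℝ)
    (hV : ∀ θ ∈ Icc (c - ε) (c + ε), ∀ x y x' y',
      |V θ x y - V θ x' y'| ≤ L * (|x - x'| + |y - y'|))
    (hVB : ∀ θ ∈ Icc (c - ε) (c + ε), ∀ x y, |V θ x y| ≤ B)
    (hVc : ∀ x y : ℝ → ℝ, ContinuousOn x (Icc (c - ε) (c + ε)) →
      ContinuousOn y (Icc (c - ε) (c + ε)) →
      ContinuousOn (fun θ => V θ (x θ) (y θ)) (Icc (c - ε) (c + ε))) :
    ∃ x y z : ℝ → ℝ, Continuous z ∧ (∀ θ, HasDerivAt x (y θ) θ) ∧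
      (∀ θ, HasDerivAt y (z θ) θ) ∧ x c = 0 ∧ y c = 0 ∧
      ∀ θ ∈ Icc (c - ε) (c + ε), z θ = V θ (x θ) (y θ) := by
  have hcI : c ∈ Icc (c - ε) (c + ε) := ⟨by linarith, by linarith⟩
  obtain ⟨K, hK⟩ : ∃ K : NNReal, (K : ℝ) = 1 + 2 * L := ⟨⟨1 + 2 * L, by linarith⟩, rfl⟩
  obtain ⟨A, hA⟩ : ∃ A : NNReal, (A : ℝ) = B + 1 := ⟨⟨B + 1, by linarith⟩, rfl⟩
  have hpl : IsPicardLindelof (E := ℝ × ℝ) (fun t p => (p.2, V t p.1 p.2))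
      (⟨c, hcI⟩ : Icc (c - ε) (c + ε)) (0 : ℝ × ℝ) A 0 A K := by
    constructor
    · intro t ht
      refine LipschitzOnWith.of_dist_le_mul ?_
      rintro ⟨x, y⟩ - ⟨x', y'⟩ -
      have h1 := hV t ht x y x' y'
      simp only [Prod.dist_eq, Real.dist_eq, hK]
      have h2 := le_max_left |x - x'| |y - y'|
      have h3 := le_max_right |x - x'| |y - y'|
      have h4 : 0 ≤ max |x - x'| |y - y'| := (abs_nonneg _).trans h2
      apply max_le
      · nlinarith
      · nlinarith
    · rintro ⟨x, y⟩ -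
      exact continuousOn_const.prodMk (hVc _ _ continuousOn_const continuousOn_const)
    · rintro t ht ⟨x, y⟩ hp
      simp only [Metric.mem_closedBall, dist_zero_right, hA] at hp ⊢
      rw [Prod.norm_def] at hp ⊢
      exact max_le ((le_max_right _ _).trans hp) ((hVB t ht x y).trans (by linarith))
    · simp only [hA, NNReal.coe_zero, add_sub_cancel_left, sub_sub_cancel, max_self,
        sub_zero]
      nlinarith
  obtain ⟨α, hα0, hα⟩ := hpl.exists_eq_forall_mem_Icc_hasDerivWithinAt₀
  simp only at hα0 hα
  have hx : ∀ t ∈ Icc (c - ε) (c + ε),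
      HasDerivWithinAt (fun t => (α t).1) (α t).2 (Icc (c - ε) (c + ε)) t := fun t ht =>
    (hα t ht).fst
  have hy : ∀ t ∈ Icc (c - ε) (c + ε),
      HasDerivWithinAt (fun t => (α t).2) (V t (α t).1 (α t).2) (Icc (c - ε) (c + ε)) t :=
    fun t ht => (hα t ht).snd
  have hzc : ContinuousOn (fun t => V t (α t).1 (α t).2) (Icc (c - ε) (c + ε)) :=
    hVc _ _ (fun t ht => (hx t ht).continuousWithinAt) (fun t ht => (hy t ht).continuousWithinAt)
  have hle : c - ε ≤ c + ε := by linarith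
  set z : ℝ → ℝ := fun t => V (auxClip (c - ε) (c + ε) t) (α (auxClip (c - ε) (c + ε) t)).1
    (α (auxClip (c - ε) (c + ε) t)).2 with hz
  have hzcont : Continuous z :=
    hzc.comp_continuous (auxClip_continuous _ _) (fun t => auxClip_mem hle t)
  have hzI : ∀ t ∈ Icc (c - ε) (c + ε), z t = V t (α t).1 (α t).2 := by
    intro t ht
    simp only [hz, auxClip_of_mem ht]
  set y : ℝ → ℝ := fun t => ∫ s in c..t, z s with hydef
  have hyd : ∀ t, HasDerivAt y (z t) t := fun t => hzcont.integral_hasStrictDerivAt c t |>.hasDerivAt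
  have hycont : Continuous y := continuous_iff_continuousAt.2 fun t => (hyd t).continuousAt
  set x : ℝ → ℝ := fun t => ∫ s in c..t, y s with hxdef
  have hxd : ∀ t, HasDerivAt x (y t) t := fun t => hycont.integral_hasStrictDerivAt c t |>.hasDerivAt
  have hy0 : y c = 0 := by simp [hydef]
  have hx0 : x c = 0 := by simp [hxdef]
  have heqy : ∀ t ∈ Icc (c - ε) (c + ε), (α t).2 = y t := by
    intro t ht
    have := (convex_Icc (c - ε) (c + ε)).norm_image_sub_le_of_norm_hasDerivWithin_le
      (f := fun t => (α t).2 - y t) (f' := fun t => V t (α t).1 (α t).2 - z t) (C := 0)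
      (fun s hs => (hy s hs).sub (hyd s).hasDerivWithinAt)
      (fun s hs => by simp [hzI s hs]) hcI ht
    simp only [hα0, hy0, zero_mul, Prod.snd_zero, sub_zero, norm_le_zero_iff] at this
    linarith
  have heqx : ∀ t ∈ Icc (c - ε) (c + ε), (α t).1 = x t := by
    intro t ht
    have := (convex_Icc (c - ε) (c + ε)).norm_image_sub_le_of_norm_hasDerivWithin_le
      (f := fun t => (α t).1 - x t) (f' := fun t => (α t).2 - y t) (C := 0)
      (fun s hs => (hx s hs).sub (hxd s).hasDerivWithinAt)
      (fun s hs => by simp [heqy s hs]) hcI ht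
    simp only [hα0, hx0, zero_mul, Prod.fst_zero, sub_zero, norm_le_zero_iff] at this
    linarith
  refine ⟨x, y, z, hzcont, hxd, hyd, hx0, hy0, fun t ht => ?_⟩
  rw [hzI t ht, heqy t ht, heqx t ht]

theorem aux_abstract (c ε r L : ℝ) (hε : 0 < ε) (hε1 : ε ≤ 1) (hr : 0 < r) (hL : 0 ≤ L)
    (W : ℝ → ℝ → ℝ → ℝ → ℝ)
    (hW : ∀ θ ∈ Icc (c - ε) (c + ε), ∀ u v q u' v' q', |u| ≤ r → |v| ≤ r → |q| ≤ 1 →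
      |u'| ≤ r → |v'| ≤ r → |q'| ≤ 1 →
      |W θ u v q - W θ u' v' q'| ≤ L * (|u - u'| + |v - v'| + |q - q'|))
    (hWc : ∀ x y q : ℝ → ℝ, ContinuousOn x (Icc (c - ε) (c + ε)) →
      ContinuousOn y (Icc (c - ε) (c + ε)) → ContinuousOn q (Icc (c - ε) (c + ε)) →
      (∀ θ ∈ Icc (c - ε) (c + ε), |x θ| ≤ r) → (∀ θ ∈ Icc (c - ε) (c + ε), |y θ| ≤ r) →
      ContinuousOn (fun θ => W θ (x θ) (y θ) (q θ)) (Icc (c - ε) (c + ε)))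
    (hW0 : ∀ θ ∈ Icc (c - ε) (c + ε), W θ 0 0 0 = 0) :
    ∃ C > (0:ℝ), ∃ δ > (0:ℝ), δ ≤ 1 ∧
      (∀ q₁ q₂ x₁ y₁ z₁ x₂ y₂ z₂ : ℝ → ℝ,
        (∀ θ ∈ Icc (c - ε) (c + ε), |q₁ θ| ≤ 1) → (∀ θ ∈ Icc (c - ε) (c + ε), |q₂ θ| ≤ 1) →
        (∀ θ, HasDerivAt x₁ (y₁ θ) θ) → (∀ θ, HasDerivAt y₁ (z₁ θ) θ) →
        (∀ θ, HasDerivAt x₂ (y₂ θ) θ) → (∀ θ, HasDerivAt y₂ (z₂ θ) θ) →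
        x₁ c = x₂ c → y₁ c = y₂ c →
        (∀ θ ∈ Icc (c - ε) (c + ε), |x₁ θ| ≤ r ∧ |y₁ θ| ≤ r) →
        (∀ θ ∈ Icc (c - ε) (c + ε), |x₂ θ| ≤ r ∧ |y₂ θ| ≤ r) →
        (∀ θ ∈ Icc (c - ε) (c + ε), z₁ θ = W θ (x₁ θ) (y₁ θ) (q₁ θ)) →
        (∀ θ ∈ Icc (c - ε) (c + ε), z₂ θ = W θ (x₂ θ) (y₂ θ) (q₂ θ)) →
        ∀ d, 0 ≤ d → (∀ θ ∈ Icc (c - ε) (c + ε), |q₂ θ - q₁ θ| ≤ d) →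
        ∀ θ ∈ Icc (c - ε) (c + ε), |x₂ θ - x₁ θ| + |y₂ θ - y₁ θ| + |z₂ θ - z₁ θ| ≤ C * d) ∧
      (∀ q : ℝ → ℝ, ContinuousOn q (Icc (c - ε) (c + ε)) →
        (∀ θ ∈ Icc (c - ε) (c + ε), |q θ| < δ) →
        ∃ x y z : ℝ → ℝ, Continuous z ∧ (∀ θ, HasDerivAt x (y θ) θ) ∧
          (∀ θ, HasDerivAt y (z θ) θ) ∧ x c = 0 ∧ y c = 0 ∧
          (∀ θ ∈ Icc (c - ε) (c + ε), |x θ| + |y θ| + |z θ| < r) ∧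
          (∀ θ ∈ Icc (c - ε) (c + ε), z θ = W θ (x θ) (y θ) (q θ))) := by
  have hclr : ∀ t, |auxClip (-r) r t| ≤ r := fun t => abs_le.2 (auxClip_mem (by linarith) t)
  have hcle : ∀ t, |t| ≤ r → auxClip (-r) r t = t := fun t ht => auxClip_of_mem (abs_le.1 ht)
  have hcl0 : auxClip (-r) r 0 = 0 := hcle 0 (by simpa using hr.le)
  have hVlip : ∀ q : ℝ → ℝ, (∀ θ ∈ Icc (c - ε) (c + ε), |q θ| ≤ 1) →
      ∀ θ ∈ Icc (c - ε) (c + ε), ∀ x y x' y',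
      |W θ (auxClip (-r) r x) (auxClip (-r) r y) (q θ) -
        W θ (auxClip (-r) r x') (auxClip (-r) r y') (q θ)| ≤ L * (|x - x'| + |y - y'|) := by
    intro q hq θ hθ x y x' y'
    refine (hW θ hθ _ _ _ _ _ _ (hclr _) (hclr _) (hq θ hθ) (hclr _) (hclr _) (hq θ hθ)).trans ?_
    apply mul_le_mul_of_nonneg_left _ hL
    rw [sub_self, abs_zero, add_zero]
    exact add_le_add (auxClip_lip _ _ _ _) (auxClip_lip _ _ _ _)
  set E := Real.exp ((1 + 2 * L) * ε) with hE
  have hEpos : 0 < E := Real.exp_pos _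
  set C := L * (2 * E * L + 1) + 2 * E * L + 1 with hC
  have hEL : 0 ≤ E * L := by positivity
  have hCpos : 0 < C := by positivity
  have hstab : ∀ q₁ q₂ x₁ y₁ z₁ x₂ y₂ z₂ : ℝ → ℝ,
        (∀ θ ∈ Icc (c - ε) (c + ε), |q₁ θ| ≤ 1) → (∀ θ ∈ Icc (c - ε) (c + ε), |q₂ θ| ≤ 1) →
        (∀ θ, HasDerivAt x₁ (y₁ θ) θ) → (∀ θ, HasDerivAt y₁ (z₁ θ) θ) →
        (∀ θ, HasDerivAt x₂ (y₂ θ) θ) → (∀ θ, HasDerivAt y₂ (z₂ θ) θ) →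
        x₁ c = x₂ c → y₁ c = y₂ c →
        (∀ θ ∈ Icc (c - ε) (c + ε), |x₁ θ| ≤ r ∧ |y₁ θ| ≤ r) →
        (∀ θ ∈ Icc (c - ε) (c + ε), |x₂ θ| ≤ r ∧ |y₂ θ| ≤ r) →
        (∀ θ ∈ Icc (c - ε) (c + ε), z₁ θ = W θ (x₁ θ) (y₁ θ) (q₁ θ)) →
        (∀ θ ∈ Icc (c - ε) (c + ε), z₂ θ = W θ (x₂ θ) (y₂ θ) (q₂ θ)) →
        ∀ d, 0 ≤ d → (∀ θ ∈ Icc (c - ε) (c + ε), |q₂ θ - q₁ θ| ≤ d) →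
        ∀ θ ∈ Icc (c - ε) (c + ε),
          |x₂ θ - x₁ θ| + |y₂ θ - y₁ θ| + |z₂ θ - z₁ θ| ≤ C * d := by
    intro q₁ q₂ x₁ y₁ z₁ x₂ y₂ z₂ hq₁ hq₂ hx₁ hy₁ hx₂ hy₂ h0x h0y hb₁ hb₂ hz₁ hz₂ d hd hqd θ hθ
    have key := aux_stab c ε L (L * d) hL (by positivity)
      (fun θ x y => W θ (auxClip (-r) r x) (auxClip (-r) r y) (q₁ θ)) (hVlip q₁ hq₁)
      x₁ y₁ x₂ y₂ z₁ z₂ hx₁ hy₁ hx₂ hy₂ h0x h0y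
      (fun t ht => by
        simp only [hcle _ (hb₁ t ht).1, hcle _ (hb₁ t ht).2]
        exact hz₁ t ht)
      (fun t ht => by
        simp only [hcle _ (hb₂ t ht).1, hcle _ (hb₂ t ht).2]
        rw [hz₂ t ht]
        refine (hW t ht _ _ _ _ _ _ (hb₂ t ht).1 (hb₂ t ht).2 (hq₂ t ht) (hb₂ t ht).1
          (hb₂ t ht).2 (hq₁ t ht)).trans ?_
        apply mul_le_mul_of_nonneg_left _ hL
        simpa using hqd t ht) θ hθ
    rw [abs_sub_comm, abs_sub_comm (y₁ θ)] at key
    obtain ⟨k1, k2⟩ := key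
    have hz := hW θ hθ _ _ _ _ _ _ (hb₂ θ hθ).1 (hb₂ θ hθ).2 (hq₂ θ hθ) (hb₁ θ hθ).1
          (hb₁ θ hθ).2 (hq₁ θ hθ)
    rw [← hz₁ θ hθ, ← hz₂ θ hθ] at hz
    have hq := hqd θ hθ
    have h5 : L * (|x₂ θ - x₁ θ| + |y₂ θ - y₁ θ| + |q₂ θ - q₁ θ|) ≤
        L * (E * (L * d) + E * (L * d) + d) := by
      apply mul_le_mul_of_nonneg_left _ hL
      linarith
    have : C * d = L * (E * (L * d) + E * (L * d) + d) + E * (L * d) + E * (L * d) + d := by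
      rw [hC]; ring
    linarith
  refine ⟨C, hCpos, min 1 (r / (2 * C)), by positivity, min_le_left _ _, hstab, ?_⟩
  intro q hqc hqδ
  set δ := min 1 (r / (2 * C)) with hδ
  have hδpos : 0 < δ := by positivity
  have hCδ : C * δ < r := by
    have : δ ≤ r / (2 * C) := min_le_right _ _
    have h2 : C * δ ≤ C * (r / (2 * C)) := mul_le_mul_of_nonneg_left this hCpos.le
    have h3 : C * (r / (2 * C)) = r / 2 := by field_simp
    linarith
  have hq1 : ∀ θ ∈ Icc (c - ε) (c + ε), |q θ| ≤ 1 := fun θ hθ =>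
    (hqδ θ hθ).le.trans (min_le_left _ _)
  have hr0 : |(0:ℝ)| ≤ r := by simpa using hr.le
  obtain ⟨x, y, z, hzc, hx, hy, hx0, hy0, hz⟩ := aux_exist c ε L (L * (r + r + 1)) hε hε1 hL
    (by positivity) (fun θ x y => W θ (auxClip (-r) r x) (auxClip (-r) r y) (q θ))
    (hVlip q hq1)
    (by
      intro θ hθ x y
      have := hW θ hθ (auxClip (-r) r x) (auxClip (-r) r y) (q θ) 0 0 0 (hclr _) (hclr _)
        (hq1 θ hθ) hr0 hr0 (by simp)
      rw [hW0 θ hθ] at this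
      simp only [sub_zero] at this
      refine this.trans (mul_le_mul_of_nonneg_left ?_ hL)
      linarith [hclr x, hclr y, hq1 θ hθ])
    (by
      intro x y hx hy
      exact hWc _ _ _ ((auxClip_continuous _ _).comp_continuousOn hx)
        ((auxClip_continuous _ _).comp_continuousOn hy) hqc (fun _ _ => hclr _)
        (fun _ _ => hclr _))
  have hsm := aux_stab c ε L (L * δ) hL (by positivity)
      (fun θ x y => W θ (auxClip (-r) r x) (auxClip (-r) r y) (q θ)) (hVlip q hq1)
      x y (fun _ => 0) (fun _ => 0) z (fun _ => 0) hx hy (fun t => hasDerivAt_const t (0:ℝ))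
      (fun t => hasDerivAt_const t (0:ℝ)) hx0 hy0 hz
      (fun t ht => by
        simp only [hcl0]
        have := hW t ht 0 0 0 0 0 (q t) hr0 hr0 (by simp) hr0 hr0 (hq1 t ht)
        rw [hW0 t ht] at this
        refine this.trans (mul_le_mul_of_nonneg_left ?_ hL)
        simpa using (hqδ t ht).le)
  simp only [sub_zero] at hsm
  have hELC : E * (L * δ) ≤ C * δ := by
    have : E * L ≤ C := by
      rw [hC]
      have : 0 ≤ L * (2 * E * L + 1) := by positivity
      nlinarith
    nlinarith
  have hxy : ∀ θ ∈ Icc (c - ε) (c + ε), |x θ| ≤ r ∧ |y θ| ≤ r := fun θ hθ =>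
    ⟨by linarith [(hsm θ hθ).1], by linarith [(hsm θ hθ).2]⟩
  have hz' : ∀ θ ∈ Icc (c - ε) (c + ε), z θ = W θ (x θ) (y θ) (q θ) := by
    intro θ hθ
    have := hz θ hθ
    simp only [hcle _ (hxy θ hθ).1, hcle _ (hxy θ hθ).2] at this
    exact this
  refine ⟨x, y, z, hzc, hx, hy, hx0, hy0, ?_, hz'⟩
  intro θ hθ
  have := hstab (fun _ => 0) q (fun _ => 0) (fun _ => 0) (fun _ => 0) x y z
    (fun _ _ => by simp) hq1
    (fun t => hasDerivAt_const t (0:ℝ)) (fun t => hasDerivAt_const t (0:ℝ)) hx hy hx0.symm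
    hy0.symm (fun _ _ => ⟨hr0, hr0⟩) hxy (fun t ht => (hW0 t ht).symm) hz' δ hδpos.le
    (fun t ht => by simpa using (hqδ t ht).le) θ hθ
  simp only [sub_zero] at this
  linarith

theorem aux_J (lo hi r : ℝ) (hlh : lo ≤ hi) (hr : 0 ≤ r) (f : ℝ × ℝ → ℝ)
    (hf : ContinuousOn f (Ioi 0 ×ˢ Icc lo hi))
    (α β : ℝ → ℝ) (hα : ContinuousOn α (Icc lo hi)) (hβ : ContinuousOn β (Icc lo hi))
    (hpos : ∀ θ ∈ Icc lo hi, ∀ u, |u| ≤ r → 0 < α θ + β θ * u) :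
    (∀ x : ℝ → ℝ, ContinuousOn x (Icc lo hi) → (∀ θ ∈ Icc lo hi, |x θ| ≤ r) →
      ContinuousOn (fun θ => ∫ s in (α θ)..(α θ + β θ * x θ), f (s, θ)) (Icc lo hi)) ∧
    ∃ L : ℝ, 0 ≤ L ∧ ∀ θ ∈ Icc lo hi, ∀ u u', |u| ≤ r → |u'| ≤ r →
      |(∫ s in (α θ)..(α θ + β θ * u), f (s, θ)) -
        ∫ s in (α θ)..(α θ + β θ * u'), f (s, θ)| ≤ L * |u - u'| := by
  have hK : IsCompact (Icc lo hi ×ˢ Icc (-r) r) := isCompact_Icc.prod isCompact_Icc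
  have hKne : (Icc lo hi ×ˢ Icc (-r) r).Nonempty :=
    ⟨(lo, 0), ⟨le_rfl, hlh⟩, by simpa using hr⟩
  have hcont : ContinuousOn (fun p : ℝ × ℝ => α p.1 + β p.1 * p.2) (Icc lo hi ×ˢ Icc (-r) r) :=
    (hα.comp continuousOn_fst (fun p hp => hp.1)).add
      ((hβ.comp continuousOn_fst (fun p hp => hp.1)).mul continuousOn_snd)
  obtain ⟨p0, hp0, hmin⟩ := hK.exists_isMinOn hKne hcont
  obtain ⟨p1, hp1, hmax⟩ := hK.exists_isMaxOn hKne hcont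
  set m := α p0.1 + β p0.1 * p0.2 with hm
  set M := α p1.1 + β p1.1 * p1.2 with hM
  have hmpos : 0 < m := hpos _ hp0.1 _ (abs_le.2 hp0.2)
  have hmem : ∀ θ ∈ Icc lo hi, ∀ u, |u| ≤ r → α θ + β θ * u ∈ Icc m M := by
    intro θ hθ u hu
    have hq : (θ, u) ∈ Icc lo hi ×ˢ Icc (-r) r := ⟨hθ, abs_le.1 hu⟩
    exact ⟨hmin hq, hmax hq⟩
  have hmM : m ≤ M := by
    have := hmem p0.1 hp0.1 p0.2 (abs_le.2 hp0.2)
    exact this.1.trans this.2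
  have hr0 : |(0:ℝ)| ≤ r := by simpa using hr
  set ft : ℝ → ℝ → ℝ := fun θ s => f (auxClip m M s, auxClip lo hi θ) with hft
  have hftc : Continuous (Function.uncurry ft) := by
    apply hf.comp_continuous (f := fun p : ℝ × ℝ => (auxClip m M p.2, auxClip lo hi p.1))
    · exact ((auxClip_continuous _ _).comp continuous_snd).prodMk
        ((auxClip_continuous _ _).comp continuous_fst)
    · intro p
      exact ⟨hmpos.trans_le (auxClip_mem hmM _).1, auxClip_mem hlh _⟩
  have hcongr : ∀ θ ∈ Icc lo hi, ∀ s t, s ∈ Icc m M → t ∈ Icc m M →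
      (∫ s in s..t, f (s, θ)) = ∫ s in s..t, ft θ s := by
    intro θ hθ s t hs ht
    apply intervalIntegral.integral_congr
    intro w hw
    have hw' : w ∈ Icc m M := (convex_Icc m M).ordConnected.uIcc_subset hs ht hw
    simp only [hft, auxClip_of_mem hθ, auxClip_of_mem hw']
  have hαmem : ∀ θ ∈ Icc lo hi, α θ ∈ Icc m M := fun θ hθ => by
    simpa using hmem θ hθ 0 hr0
  have hii : ∀ θ s t, IntervalIntegrable (ft θ) MeasureTheory.volume s t := fun θ s t =>
    Continuous.intervalIntegrable (by exact hftc.comp (by fun_prop : Continuous fun s => (θ, s))) _ _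
  constructor
  · intro x hx hxr
    have hprim := intervalIntegral.continuous_parametric_primitive_of_continuous
      (μ := MeasureTheory.volume) (a₀ := 0) hftc
    have h1 : ContinuousOn (fun θ => (∫ s in (0:ℝ)..(α θ + β θ * x θ), ft θ s) -
        ∫ s in (0:ℝ)..(α θ), ft θ s) (Icc lo hi) := by
      apply ContinuousOn.sub
      · exact hprim.comp_continuousOn (continuousOn_id.prodMk (hα.add (hβ.mul hx)))
      · exact hprim.comp_continuousOn (continuousOn_id.prodMk hα)
    refine h1.congr ?_
    intro θ hθ
    simp only
    rw [hcongr θ hθ _ _ (hαmem θ hθ) (hmem θ hθ _ (hxr θ hθ)),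
      intervalIntegral.integral_interval_sub_left (hii _ _ _) (hii _ _ _)]
  · obtain ⟨B, hB⟩ := (isCompact_Icc.prod isCompact_Icc : IsCompact (Icc m M ×ˢ Icc lo hi)).exists_bound_of_continuousOn
      (hf.mono (prod_mono (fun s hs => hmpos.trans_le hs.1) subset_rfl))
    obtain ⟨B', hB'⟩ := (isCompact_Icc : IsCompact (Icc lo hi)).exists_bound_of_continuousOn hβ
    refine ⟨|B| * |B'|, by positivity, ?_⟩
    intro θ hθ u u' hu hu'
    rw [hcongr θ hθ _ _ (hαmem θ hθ) (hmem θ hθ _ hu),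
      hcongr θ hθ _ _ (hαmem θ hθ) (hmem θ hθ _ hu'),
      intervalIntegral.integral_interval_sub_left (hii _ _ _) (hii _ _ _)]
    have h1 := intervalIntegral.norm_integral_le_of_norm_le_const
      (a := α θ + β θ * u') (b := α θ + β θ * u) (f := ft θ) (C := |B|)
      (fun s _ => (hB (auxClip m M s, auxClip lo hi θ)
        ⟨auxClip_mem hmM _, auxClip_mem hlh _⟩).trans (le_abs_self B))
    rw [Real.norm_eq_abs] at h1
    refine h1.trans ?_
    rw [show α θ + β θ * u - (α θ + β θ * u') = β θ * (u - u') by ring, abs_mul, ← mul_assoc]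
    apply mul_le_mul_of_nonneg_right _ (abs_nonneg _)
    apply mul_le_mul_of_nonneg_left _ (abs_nonneg _)
    exact (hB' θ hθ).trans (le_abs_self _)

theorem aux_thetaBar_mem (s : ℝ) : thetaBar s ∈ Ioo 0 Real.pi := by
  have h := Real.exp_pos (2 * s)
  have h1 : (0:ℝ) < 1 + Real.exp (2 * s) := by positivity
  unfold thetaBar
  constructor
  · rw [Real.arccos_pos, div_lt_one h1]
    linarith
  · refine lt_of_le_of_ne (Real.arccos_le_pi _) ?_
    rw [Ne, Real.arccos_eq_pi, not_le, lt_div_iff₀ h1]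
    linarith

theorem aux_thetaBar_cont : Continuous thetaBar := by
  unfold thetaBar
  apply Real.continuous_arccos.comp
  apply Continuous.div (by fun_prop) (by fun_prop)
  intro s
  positivity

theorem aux_fChar_cont {θ : ℝ} (hθ : θ ∈ Ioo 0 Real.pi) : ContinuousAt fChar θ := by
  have h1 : Real.cos θ < 1 := by
    rw [← Real.cos_zero]
    exact Real.cos_lt_cos_of_nonneg_of_le_pi le_rfl hθ.2.le hθ.1
  have h2 : -1 < Real.cos θ := by
    rw [← Real.cos_pi]
    exact Real.cos_lt_cos_of_nonneg_of_le_pi hθ.1.le le_rfl hθ.2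
  unfold fChar
  have h3 : 1 + Real.cos θ ≠ 0 := by linarith
  have h4 : (1 - Real.cos θ) / (1 + Real.cos θ) ≠ 0 :=
    div_ne_zero (by linarith) h3
  refine continuousAt_const.mul (ContinuousAt.log ?_ h4)
  exact ContinuousAt.div (by fun_prop) (by fun_prop) h3

theorem aux_rhoth_cont (ρ ρθ : ℝ → ℝ → ℝ)
    (hρ : ContDiffOn ℝ 2 (fun q : ℝ × ℝ => ρ q.1 q.2)
      (Set.Ioi 0 ×ˢ Set.Ioo 0 Real.pi))
    (hρθ : ∀ r ∈ Set.Ioi (0:ℝ), ∀ t ∈ Set.Ioo 0 Real.pi,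
      HasDerivAt (fun u => ρ r u) (ρθ r t) t) :
    ContinuousOn (fun q : ℝ × ℝ => ρθ q.1 q.2) (Set.Ioi 0 ×ˢ Set.Ioo 0 Real.pi) := by
  have ho : IsOpen (Set.Ioi (0:ℝ) ×ˢ Set.Ioo 0 Real.pi) := isOpen_Ioi.prod isOpen_Ioo
  have h1 := hρ.continuousOn_fderiv_of_isOpen ho (by norm_num)
  have h2 : ContinuousOn (fun q : ℝ × ℝ => fderiv ℝ (fun q : ℝ × ℝ => ρ q.1 q.2) q (0, 1))
      (Set.Ioi 0 ×ˢ Set.Ioo 0 Real.pi) := h1.clm_apply continuousOn_const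
  refine h2.congr ?_
  rintro ⟨x, t⟩ hq
  have hd : DifferentiableAt ℝ (fun q : ℝ × ℝ => ρ q.1 q.2) (x, t) :=
    (hρ.differentiableOn (by norm_num)).differentiableAt (ho.mem_nhds hq)
  have h3 : HasDerivAt (fun u : ℝ => (x, u)) ((0:ℝ), (1:ℝ)) t :=
    (hasDerivAt_const t x).prodMk (hasDerivAt_id t)
  have h4 := hd.hasFDerivAt.comp_hasDerivAt t h3
  exact (hρθ x hq.1 t hq.2).unique h4

theorem aux_calF_cont (g : ℝ) (ρθ : ℝ → ℝ → ℝ)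
    (h : ContinuousOn (fun q : ℝ × ℝ => ρθ q.1 q.2) (Set.Ioi 0 ×ˢ Set.Ioo 0 Real.pi)) :
    ContinuousOn (fun q : ℝ × ℝ => calF g ρθ q.1 q.2) (Set.Ioi 0 ×ˢ Set.Ioo 0 Real.pi) := by
  rintro ⟨ξ0, θ0⟩ ⟨hξ, hθ⟩
  simp only [mem_Ioi] at hξ hθ
  apply ContinuousAt.continuousWithinAt
  set k : ℝ → ℝ → ℝ := fun ξ s =>
    g * ρθ (max (ξ0 / 2) ξ * (Real.exp s + Real.exp (-s)) / 2) (thetaBar s) with hk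
  have hkc : Continuous (Function.uncurry k) := by
    apply Continuous.mul continuous_const
    apply h.comp_continuous (f := fun p : ℝ × ℝ =>
      (max (ξ0 / 2) p.1 * (Real.exp p.2 + Real.exp (-p.2)) / 2, thetaBar p.2))
    · apply Continuous.prodMk (by fun_prop)
      exact aux_thetaBar_cont.comp continuous_snd
    · intro p
      refine ⟨?_, aux_thetaBar_mem _⟩
      have : 0 < max (ξ0 / 2) p.1 := lt_max_of_lt_left (by linarith)
      simp only [mem_Ioi]
      positivity
  have hprim := intervalIntegral.continuous_parametric_primitive_of_continuous
      (μ := MeasureTheory.volume) (a₀ := 0) hkc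
  have h1 : ContinuousAt (fun q : ℝ × ℝ => ∫ s in (0:ℝ)..(fChar q.2), k q.1 s) (ξ0, θ0) := by
    have h2 : ContinuousAt (fun q : ℝ × ℝ => (q.1, fChar q.2)) (ξ0, θ0) := by
      apply continuousAt_fst.prodMk
      exact ContinuousAt.comp (f := fun q : ℝ × ℝ => q.2) (aux_fChar_cont hθ) continuousAt_snd
    exact hprim.continuousAt.comp h2
  refine h1.congr ?_
  have hev : ∀ᶠ q : ℝ × ℝ in nhds (ξ0, θ0), ξ0 / 2 < q.1 :=
    continuousAt_fst.eventually (lt_mem_nhds (by simp only; linarith))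
  filter_upwards [hev] with q hq
  simp only [hk, calF, max_eq_right hq.le]

/-- The right-hand side of the surface equation solved for the second derivative. -/
noncomputable def auxPsi (κ H V z e : ℝ) : ℝ :=
  κ⁻¹ * ((H ^ 2 + V ^ 2) ^ ((3:ℝ)/2) / H) * e + (2 * H ^ 2 + 3 * V ^ 2) / H
    - z * V * (H ^ 2 + V ^ 2) / H ^ 2

theorem auxPsi_contDiff (κ : ℝ) :
    ContDiffOn ℝ 1 (fun p : ℝ × ℝ × ℝ × ℝ => auxPsi κ p.1 p.2.1 p.2.2.1 p.2.2.2)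
      (Ioi 0 ×ˢ univ) := by
  rintro ⟨H, V, z, e⟩ ⟨hH, -⟩
  simp only [mem_Ioi] at hH
  have hQ : H ^ 2 + V ^ 2 ≠ 0 := by positivity
  have hH0 : H ≠ 0 := hH.ne'
  have hH2 : H ^ 2 ≠ 0 := by positivity
  apply ContDiffAt.contDiffWithinAt
  unfold auxPsi
  have hq : ContDiffAt ℝ 1 (fun p : ℝ × ℝ × ℝ × ℝ => p.1 ^ 2 + p.2.1 ^ 2) (H, V, z, e) := by
    fun_prop
  have hq2 : ContDiffAt ℝ 1 (fun p : ℝ × ℝ × ℝ × ℝ => (p.1 ^ 2 + p.2.1 ^ 2) ^ ((3:ℝ)/2))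
      (H, V, z, e) := hq.rpow_const_of_ne hQ
  refine ContDiffAt.sub (ContDiffAt.add (ContDiffAt.mul (contDiffAt_const.mul
    (hq2.div contDiffAt_fst hH0)) (by fun_prop)) ?_) ?_
  · exact ContDiffAt.div (by fun_prop) (by fun_prop) hH0
  · exact ContDiffAt.div (by fun_prop) (by fun_prop) hH2

theorem auxPsi_lip (κ m M : ℝ) (hm : 0 < m) :
    ∃ L : ℝ, 0 ≤ L ∧ ∀ z H V e H' V' e', |z| ≤ M → m ≤ H → |H| ≤ M → |V| ≤ M → |e| ≤ M →
      m ≤ H' → |H'| ≤ M → |V'| ≤ M → |e'| ≤ M →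
      |auxPsi κ H V z e - auxPsi κ H' V' z e'| ≤ L * (|H - H'| + |V - V'| + |e - e'|) := by
  have hsub : (Icc m M ×ˢ Icc (-M) M ×ˢ Icc (-M) M ×ˢ Icc (-M) M : Set (ℝ × ℝ × ℝ × ℝ)) ⊆
      Ioi 0 ×ˢ univ := fun p hp => ⟨hm.trans_le hp.1.1, trivial⟩
  obtain ⟨K, hK⟩ := ((auxPsi_contDiff κ).mono hsub).exists_lipschitzOnWith one_ne_zero
    ((convex_Icc _ _).prod ((convex_Icc _ _).prod ((convex_Icc _ _).prod (convex_Icc _ _))))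
    (isCompact_Icc.prod (isCompact_Icc.prod (isCompact_Icc.prod isCompact_Icc)))
  refine ⟨K, K.2, ?_⟩
  intro z H V e H' V' e' hz h1 h2 h3 h4 h1' h2' h3' h4'
  have := hK.dist_le_mul (H, V, z, e)
    ⟨⟨h1, (abs_le.1 h2).2⟩, abs_le.1 h3, abs_le.1 hz, abs_le.1 h4⟩ (H', V', z, e')
    ⟨⟨h1', (abs_le.1 h2').2⟩, abs_le.1 h3', abs_le.1 hz, abs_le.1 h4'⟩
  simp only [Prod.dist_eq, Real.dist_eq, sub_self, abs_zero] at this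
  refine this.trans (mul_le_mul_of_nonneg_left ?_ K.2)
  have a1 := abs_nonneg (H - H')
  have a2 := abs_nonneg (V - V')
  have a3 := abs_nonneg (e - e')
  refine max_le (by linarith) (max_le (by linarith) (max_le (by linarith) (by linarith)))

theorem auxPsi_iff (κ H V z e w : ℝ) (hκ : 0 < κ) (hH : 0 < H) :
    -e - κ * ((2 * H ^ 2 + 3 * V ^ 2) / ((H ^ 2 + V ^ 2) ^ ((3:ℝ)/2))
      - w * H / ((H ^ 2 + V ^ 2) ^ ((3:ℝ)/2))
      - z * V / (H * ((H ^ 2 + V ^ 2) ^ ((1:ℝ)/2)))) = 0 ↔ w = auxPsi κ H V z e := by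
  have hQ : 0 < H ^ 2 + V ^ 2 := by positivity
  unfold auxPsi
  have hS : 0 < (H ^ 2 + V ^ 2) ^ ((1:ℝ)/2) := Real.rpow_pos_of_pos hQ _
  have hSQ : ((H ^ 2 + V ^ 2) ^ ((1:ℝ)/2)) ^ 2 = H ^ 2 + V ^ 2 := by
    rw [← Real.rpow_natCast, ← Real.rpow_mul hQ.le]; norm_num
  have hA : (H ^ 2 + V ^ 2) ^ ((3:ℝ)/2) = ((H ^ 2 + V ^ 2) ^ ((1:ℝ)/2)) ^ 3 := by
    rw [← Real.rpow_natCast _ 3, ← Real.rpow_mul hQ.le]; norm_num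
  rw [hA]
  set S := (H ^ 2 + V ^ 2) ^ ((1:ℝ)/2) with hSdef
  rw [← hSQ]
  have hid : -e - κ * ((2 * H ^ 2 + 3 * V ^ 2) / S ^ 3 - w * H / S ^ 3 - z * V / (H * S)) =
      κ * H / S ^ 3 * (w - (κ⁻¹ * (S ^ 3 / H) * e + (2 * H ^ 2 + 3 * V ^ 2) / H
        - z * V * S ^ 2 / H ^ 2)) := by
    field_simp
    ring
  rw [hid, mul_eq_zero, sub_eq_zero]
  have : κ * H / S ^ 3 ≠ 0 := by positivity
  simp [this]

theorem aux_contDiff_two {x y z : ℝ → ℝ} (hx : ∀ θ, HasDerivAt x (y θ) θ)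
    (hy : ∀ θ, HasDerivAt y (z θ) θ) (hz : Continuous z) : ContDiff ℝ 2 x := by
  have hdx : deriv x = y := funext fun t => (hx t).deriv
  have hdy : deriv y = z := funext fun t => (hy t).deriv
  have hy1 : ContDiff ℝ 1 y := by
    rw [contDiff_one_iff_deriv, hdy]
    exact ⟨fun t => (hy t).differentiableAt, hz⟩
  rw [show (2 : WithTop ℕ∞) = 1 + 1 from by norm_num, contDiff_succ_iff_deriv, hdx]
  exact ⟨fun t => (hx t).differentiableAt, by simp, hy1⟩

theorem aux_hasDeriv_of_contDiff_two {h : ℝ → ℝ} (hh : ContDiff ℝ 2 h) :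
    (∀ θ, HasDerivAt h (deriv h θ) θ) ∧ (∀ θ, HasDerivAt (deriv h) (deriv (deriv h) θ) θ) ∧
      Continuous (deriv (deriv h)) := by
  rw [show (2 : WithTop ℕ∞) = 1 + 1 from by norm_num, contDiff_succ_iff_deriv] at hh
  obtain ⟨h1, -, h2⟩ := hh
  rw [contDiff_one_iff_deriv] at h2
  exact ⟨fun t => (h1 t).hasDerivAt, fun t => (h2.1 t).hasDerivAt, h2.2⟩

theorem aux_strip_sub : Istrip ⊆ Ioo 0 Real.pi := by
  intro θ hθ
  have := Real.pi_gt_three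
  unfold Istrip at hθ
  norm_num at hθ
  exact ⟨by linarith [hθ.1], by linarith [hθ.2]⟩

theorem aux_ii (f : ℝ × ℝ → ℝ) (hf : ContinuousOn f (Ioi 0 ×ˢ Ioo 0 Real.pi)) (θ : ℝ)
    (hθ : θ ∈ Ioo 0 Real.pi) (s t : ℝ) (hs : 0 < s) (ht : 0 < t) :
    IntervalIntegrable (fun w => f (w, θ)) MeasureTheory.volume s t := by
  apply ContinuousOn.intervalIntegrable
  apply hf.comp (f := fun w => (w, θ)) (by fun_prop)
  intro w hw
  exact ⟨(convex_Ioi (0:ℝ)).ordConnected.uIcc_subset hs ht hw, hθ⟩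

/-- Reduction of the Bernoulli equation to a second order ODE for the deviation from `γ`. -/
theorem aux_reduction (g R σ Patm a b : ℝ)
    (hR : 0 < R) (hσ : 0 < σ) (hP : 0 < Patm) (ha : 0 < a)
    (ρ ρθ : ℝ → ℝ → ℝ)
    (hρ : ContDiffOn ℝ 2 (fun q : ℝ × ℝ => ρ q.1 q.2)
      (Set.Ioi 0 ×ˢ Set.Ioo 0 Real.pi))
    (hρθ : ∀ r ∈ Set.Ioi (0:ℝ), ∀ t ∈ Set.Ioo 0 Real.pi,
      HasDerivAt (fun u => ρ r u) (ρθ r t) t)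
    (F : ℝ → ℝ) (hF : ContDiffOn ℝ 1 F (Set.Ioi 0))
    (γ : ℝ → ℝ) (hγ : ContDiff ℝ 2 γ)
    (hγpos : ∀ θ ∈ Istrip, 0 < 1 + γ θ)
    (℘γ : ℝ → ℝ)
    (h℘ : ∀ θ ∈ Istrip, FF g R σ Patm a b ρ ρθ F γ ℘γ θ = 0) :
    ∃ (r L : ℝ) (W : ℝ → ℝ → ℝ → ℝ → ℝ), 0 < r ∧ 0 ≤ L ∧
      (∀ θ ∈ Istrip, ∀ u v q u' v' q', |u| ≤ r → |v| ≤ r → |q| ≤ 1 →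
        |u'| ≤ r → |v'| ≤ r → |q'| ≤ 1 →
        |W θ u v q - W θ u' v' q'| ≤ L * (|u - u'| + |v - v'| + |q - q'|)) ∧
      (∀ x y q : ℝ → ℝ, ContinuousOn x Istrip →
        ContinuousOn y Istrip → ContinuousOn q Istrip →
        (∀ θ ∈ Istrip, |x θ| ≤ r) → (∀ θ ∈ Istrip, |y θ| ≤ r) →
        ContinuousOn (fun θ => W θ (x θ) (y θ) (q θ)) Istrip) ∧
      (∀ θ ∈ Istrip, W θ 0 0 0 = 0) ∧
      (∀ h ℘ : ℝ → ℝ, ∀ θ ∈ Istrip, |h θ - γ θ| ≤ r →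
        (FF g R σ Patm a b ρ ρθ F h ℘ θ = 0 ↔
          deriv (deriv h) θ - deriv (deriv γ) θ =
            W θ (h θ - γ θ) (deriv h θ - deriv γ θ) (℘ θ - ℘γ θ))) := by
  obtain ⟨hγ1, hγ2, hγ3⟩ := aux_hasDeriv_of_contDiff_two hγ
  have hγc : Continuous γ := hγ.continuous
  have hγ'c : Continuous (deriv γ) := continuous_iff_continuousAt.2 fun t => (hγ2 t).continuousAt
  have hIc : IsCompact Istrip := isCompact_Icc
  have hlh : Real.pi / 2 - 0.016 ≤ Real.pi / 2 + 0.016 := by norm_num; linarith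
  have hIne : Istrip.Nonempty := nonempty_Icc.2 hlh
  obtain ⟨t0, ht0, hmin⟩ := hIc.exists_isMinOn hIne
    (f := fun θ => 1 + γ θ) (by fun_prop)
  set r := (1 + γ t0) / 2 with hrdef
  have hr : 0 < r := by have := hγpos t0 ht0; positivity
  have hH : ∀ θ ∈ Istrip, ∀ u, |u| ≤ r → r ≤ 1 + γ θ + u := by
    intro θ hθ u hu
    have h1 : 1 + γ t0 ≤ 1 + γ θ := hmin hθ
    have := (abs_le.1 hu).1
    linarith
  have hsin : ∀ θ ∈ Istrip, 0 < Real.sin θ := fun θ hθ =>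
    Real.sin_pos_of_mem_Ioo (aux_strip_sub hθ)
  have hcot : ContinuousOn Real.cot Istrip := by
    have : ContinuousOn (fun θ => Real.cos θ / Real.sin θ) Istrip :=
      Real.continuous_cos.continuousOn.div Real.continuous_sin.continuousOn
        (fun θ hθ => (hsin θ hθ).ne')
    exact this.congr fun θ _ => Real.cot_eq_cos_div_sin θ
  -- the two integrands
  set f1 : ℝ × ℝ → ℝ := fun p => ρ p.1 p.2 with hf1
  set f2 : ℝ × ℝ → ℝ := fun p => F p.1 / p.1 + calF g ρθ p.1 p.2 with hf2
  have hf1c : ContinuousOn f1 (Ioi 0 ×ˢ Ioo 0 Real.pi) := hρ.continuousOn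
  have hf2c : ContinuousOn f2 (Ioi 0 ×ˢ Ioo 0 Real.pi) := by
    apply ContinuousOn.add _ (aux_calF_cont g ρθ (aux_rhoth_cont ρ ρθ hρ hρθ))
    exact (hF.continuousOn.comp continuousOn_fst (fun p hp => hp.1)).div continuousOn_fst
      (fun p hp => (ne_of_gt hp.1))
  have hsubs : (Ioi (0:ℝ) ×ˢ Icc (Real.pi / 2 - 0.016) (Real.pi / 2 + 0.016)) ⊆
      Ioi 0 ×ˢ Ioo 0 Real.pi := prod_mono subset_rfl aux_strip_sub
  obtain ⟨hJ1c, L1, hL1, hJ1L⟩ := aux_J _ _ r hlh hr.le f1 (hf1c.mono hsubs)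
    (fun θ => R * (1 + γ θ)) (fun _ => R) (by fun_prop) (by fun_prop)
    (fun θ hθ u hu => by
      have := hH θ hθ u hu
      have : 0 < R * (1 + γ θ + u) := mul_pos hR (by linarith)
      linarith)
  obtain ⟨hJ2c, L2, hL2, hJ2L⟩ := aux_J _ _ r hlh hr.le f2 (hf2c.mono hsubs)
    (fun θ => R * (1 + γ θ) * Real.sin θ) (fun θ => R * Real.sin θ) (by fun_prop) (by fun_prop)
    (fun θ hθ u hu => by
      have := hH θ hθ u hu
      have : 0 < R * (1 + γ θ + u) * Real.sin θ :=
        mul_pos (mul_pos hR (by linarith)) (hsin θ hθ)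
      linarith)
  set J1 : ℝ → ℝ → ℝ := fun θ u =>
    ∫ s in (R * (1 + γ θ))..(R * (1 + γ θ) + R * u), f1 (s, θ) with hJ1
  set J2 : ℝ → ℝ → ℝ := fun θ u =>
    ∫ s in (R * (1 + γ θ) * Real.sin θ)..(R * (1 + γ θ) * Real.sin θ + R * Real.sin θ * u),
      f2 (s, θ) with hJ2
  set j : ℝ → ℝ → ℝ := fun θ u => (g / Patm) * J1 θ u - (1 / Patm) * J2 θ u with hj
  have hj0 : ∀ θ, j θ 0 = 0 := by intro θ; simp [hj, hJ1, hJ2]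
  set Lj := |g / Patm| * L1 + |1 / Patm| * L2 with hLj
  have hLjpos : 0 ≤ Lj := by positivity
  have hjL : ∀ θ ∈ Istrip, ∀ u u', |u| ≤ r → |u'| ≤ r → |j θ u - j θ u'| ≤ Lj * |u - u'| := by
    intro θ hθ u u' hu hu'
    have e1 : |J1 θ u - J1 θ u'| ≤ L1 * |u - u'| := hJ1L θ hθ u u' hu hu'
    have e2 : |J2 θ u - J2 θ u'| ≤ L2 * |u - u'| := hJ2L θ hθ u u' hu hu'
    have : j θ u - j θ u' = (g / Patm) * (J1 θ u - J1 θ u') +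
        -((1 / Patm) * (J2 θ u - J2 θ u')) := by simp only [hj]; ring
    rw [this]
    refine (abs_add_le _ _).trans ?_
    rw [abs_neg, abs_mul, abs_mul, hLj, add_mul, mul_assoc, mul_assoc]
    exact add_le_add (mul_le_mul_of_nonneg_left e1 (abs_nonneg _))
      (mul_le_mul_of_nonneg_left e2 (abs_nonneg _))
  have hjc : ∀ x : ℝ → ℝ, ContinuousOn x Istrip → (∀ θ ∈ Istrip, |x θ| ≤ r) →
      ContinuousOn (fun θ => j θ (x θ)) Istrip := fun x hx hxr =>
    (continuousOn_const.mul (hJ1c x hx hxr)).sub (continuousOn_const.mul (hJ2c x hx hxr))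
  set κ := σ / (R * Patm) with hκdef
  have hκ : 0 < κ := by positivity
  have hr0 : |(0:ℝ)| ≤ r := by simpa using hr.le
  -- the value of the pressure terms along `γ`
  set m : ℝ → ℝ := fun θ => -(κ * ((2 * (1 + γ θ)^2 + 3 * (deriv γ θ)^2) /
            (((1 + γ θ)^2 + (deriv γ θ)^2) ^ ((3:ℝ)/2))
          - deriv (deriv γ) θ * (1 + γ θ) /
            (((1 + γ θ)^2 + (deriv γ θ)^2) ^ ((3:ℝ)/2))
          - Real.cot θ * deriv γ θ /
            ((1 + γ θ) * (((1 + γ θ)^2 + (deriv γ θ)^2) ^ ((1:ℝ)/2))))) with hm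
  have hQpos : ∀ θ ∈ Istrip, 0 < (1 + γ θ)^2 + (deriv γ θ)^2 := fun θ hθ => by
    have := hγpos θ hθ
    positivity
  have hmc : ContinuousOn m Istrip := by
    have hQ : ContinuousOn (fun θ => (1 + γ θ)^2 + (deriv γ θ)^2) Istrip := by fun_prop
    have hQ3 : ContinuousOn (fun θ => ((1 + γ θ)^2 + (deriv γ θ)^2) ^ ((3:ℝ)/2)) Istrip :=
      hQ.rpow_const fun θ hθ => Or.inl (hQpos θ hθ).ne'
    have hQ1 : ContinuousOn (fun θ => ((1 + γ θ)^2 + (deriv γ θ)^2) ^ ((1:ℝ)/2)) Istrip :=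
      hQ.rpow_const fun θ hθ => Or.inl (hQpos θ hθ).ne'
    have hn3 : ∀ θ ∈ Istrip, ((1 + γ θ)^2 + (deriv γ θ)^2) ^ ((3:ℝ)/2) ≠ 0 := fun θ hθ =>
      (Real.rpow_pos_of_pos (hQpos θ hθ) _).ne'
    refine (continuousOn_const.mul (ContinuousOn.sub (ContinuousOn.sub
      (ContinuousOn.div (by fun_prop) hQ3 hn3) (ContinuousOn.div (by fun_prop) hQ3 hn3))
      (ContinuousOn.div (hcot.mul hγ'c.continuousOn) (ContinuousOn.mul (by fun_prop) hQ1)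
        ?_))).neg
    intro θ hθ
    exact mul_ne_zero (hγpos θ hθ).ne' (Real.rpow_pos_of_pos (hQpos θ hθ) _).ne'
  obtain ⟨M1, hM1⟩ := hIc.exists_bound_of_continuousOn (f := fun θ => 1 + γ θ) (by fun_prop)
  obtain ⟨M2, hM2⟩ := hIc.exists_bound_of_continuousOn (f := deriv γ) hγ'c.continuousOn
  obtain ⟨M3, hM3⟩ := hIc.exists_bound_of_continuousOn hcot
  obtain ⟨M4, hM4⟩ := hIc.exists_bound_of_continuousOn hmc
  simp only [Real.norm_eq_abs] at hM1 hM2 hM3 hM4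
  set M := |M1| + |M2| + |M3| + |M4| + r + Lj * r + 1 with hM
  have hLjr : 0 ≤ Lj * r := by positivity
  have hMb : |M1| + r ≤ M ∧ |M2| + r ≤ M ∧ |M3| ≤ M ∧ |M4| + Lj * r + 1 ≤ M := by
    have := abs_nonneg M1
    have := abs_nonneg M2
    have := abs_nonneg M3
    have := abs_nonneg M4
    refine ⟨?_, ?_, ?_, ?_⟩ <;> linarith
  obtain ⟨LΨ, hLΨ, hΨ⟩ := auxPsi_lip κ r M hr
  set W : ℝ → ℝ → ℝ → ℝ → ℝ := fun θ u v q =>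
    auxPsi κ (1 + γ θ + u) (deriv γ θ + v) (Real.cot θ) (m θ + j θ u + q)
      - deriv (deriv γ) θ with hW
  -- the equation solved for the second derivative
  have hkey : ∀ h ℘ : ℝ → ℝ, ∀ θ ∈ Istrip, |h θ - γ θ| ≤ r →
        (FF g R σ Patm a b ρ ρθ F h ℘ θ = 0 ↔
          deriv (deriv h) θ - deriv (deriv γ) θ =
            W θ (h θ - γ θ) (deriv h θ - deriv γ θ) (℘ θ - ℘γ θ)) := by
    intro h ℘ θ hθ hhr
    have hθ' := aux_strip_sub hθ
    have hs := hsin θ hθ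
    have hH1 : 0 < 1 + h θ := by have := hH θ hθ _ hhr; linarith
    have hG1 := hγpos θ hθ
    have hi1 : (∫ s in a..(R * (1 + h θ)), f1 (s, θ)) - (∫ s in a..(R * (1 + γ θ)), f1 (s, θ)) =
        J1 θ (h θ - γ θ) := by
      rw [intervalIntegral.integral_interval_sub_left
        (aux_ii f1 hf1c θ hθ' _ _ ha (by positivity))
        (aux_ii f1 hf1c θ hθ' _ _ ha (by positivity))]
      simp only [hJ1]
      rw [show R * (1 + γ θ) + R * (h θ - γ θ) = R * (1 + h θ) by ring]
    have hi2 : (∫ s in (a * Real.sin θ)..(R * (1 + h θ) * Real.sin θ), f2 (s, θ)) -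
        (∫ s in (a * Real.sin θ)..(R * (1 + γ θ) * Real.sin θ), f2 (s, θ)) =
        J2 θ (h θ - γ θ) := by
      rw [intervalIntegral.integral_interval_sub_left
        (aux_ii f2 hf2c θ hθ' _ _ (by positivity) (by positivity))
        (aux_ii f2 hf2c θ hθ' _ _ (by positivity) (by positivity))]
      simp only [hJ2]
      rw [show R * (1 + γ θ) * Real.sin θ + R * Real.sin θ * (h θ - γ θ) =
        R * (1 + h θ) * Real.sin θ by ring]
    simp only [hf1, hf2] at hi1 hi2
    have h0 := h℘ θ hθ
    unfold FF at h0 ⊢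
    rw [← hκdef] at h0 ⊢
    have hiff := auxPsi_iff κ (1 + h θ) (deriv h θ) (Real.cot θ)
      (m θ + j θ (h θ - γ θ) + (℘ θ - ℘γ θ)) (deriv (deriv h) θ) hκ hH1
    simp only [hW]
    rw [sub_left_inj, show 1 + γ θ + (h θ - γ θ) = 1 + h θ by ring,
      show deriv γ θ + (deriv h θ - deriv γ θ) = deriv h θ by ring, ← hiff]
    have hje : j θ (h θ - γ θ) = (g / Patm) * J1 θ (h θ - γ θ) -
      (1 / Patm) * J2 θ (h θ - γ θ) := rfl
    rw [hje, ← hi1, ← hi2]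
    have hmθ : m θ = -(κ * ((2 * (1 + γ θ)^2 + 3 * (deriv γ θ)^2) /
            (((1 + γ θ)^2 + (deriv γ θ)^2) ^ ((3:ℝ)/2))
          - deriv (deriv γ) θ * (1 + γ θ) /
            (((1 + γ θ)^2 + (deriv γ θ)^2) ^ ((3:ℝ)/2))
          - Real.cot θ * deriv γ θ /
            ((1 + γ θ) * (((1 + γ θ)^2 + (deriv γ θ)^2) ^ ((1:ℝ)/2))))) := rfl
    have hm2 : κ * ((2 * (1 + γ θ)^2 + 3 * (deriv γ θ)^2) /
            (((1 + γ θ)^2 + (deriv γ θ)^2) ^ ((3:ℝ)/2))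
          - deriv (deriv γ) θ * (1 + γ θ) /
            (((1 + γ θ)^2 + (deriv γ θ)^2) ^ ((3:ℝ)/2))
          - Real.cot θ * deriv γ θ /
            ((1 + γ θ) * (((1 + γ θ)^2 + (deriv γ θ)^2) ^ ((1:ℝ)/2)))) = - m θ := by
      rw [hmθ, neg_neg]
    rw [hm2] at h0
    constructor
    · intro h1
      linarith
    · intro h1
      linarith
  refine ⟨r, LΨ * (1 + Lj), W, hr, by positivity, ?_, ?_, ?_, hkey⟩
  · intro θ hθ u v q u' v' q' hu hv hq hu' hv' hq'
    have b1 : ∀ u, |u| ≤ r → |1 + γ θ + u| ≤ M := fun u hu =>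
      (abs_add_le _ _).trans (by linarith [hM1 θ hθ, le_abs_self M1, hMb.1])
    have b2 : ∀ v, |v| ≤ r → |deriv γ θ + v| ≤ M := fun u hu =>
      (abs_add_le _ _).trans (by linarith [hM2 θ hθ, le_abs_self M2, hMb.2.1])
    have b4 : ∀ u q, |u| ≤ r → |q| ≤ 1 → |m θ + j θ u + q| ≤ M := by
      intro u q hu hq
      have e1 := hjL θ hθ u 0 hu hr0
      rw [hj0, sub_zero, sub_zero] at e1
      have e2 : Lj * |u| ≤ Lj * r := mul_le_mul_of_nonneg_left hu hLjpos
      have e3 := abs_add_le (m θ + j θ u) q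
      have e4 := abs_add_le (m θ) (j θ u)
      linarith [hM4 θ hθ, le_abs_self M4, hMb.2.2.2]
    have key := hΨ (Real.cot θ) _ _ _ _ _ _
      ((hM3 θ hθ).trans ((le_abs_self M3).trans hMb.2.2.1))
      (hH θ hθ u hu) (b1 u hu) (b2 v hv) (b4 u q hu hq)
      (hH θ hθ u' hu') (b1 u' hu') (b2 v' hv') (b4 u' q' hu' hq')
    simp only [hW, sub_sub_sub_cancel_right]
    refine key.trans ?_
    rw [mul_assoc]
    apply mul_le_mul_of_nonneg_left _ hLΨ
    have e1 := hjL θ hθ u u' hu hu'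
    have e2 : |m θ + j θ u + q - (m θ + j θ u' + q')| ≤ |j θ u - j θ u'| + |q - q'| := by
      rw [show m θ + j θ u + q - (m θ + j θ u' + q') = (j θ u - j θ u') + (q - q') by ring]
      exact abs_add_le _ _
    rw [add_sub_add_left_eq_sub, add_sub_add_left_eq_sub]
    have e3 : 0 ≤ Lj * |v - v'| := by positivity
    have e4 : 0 ≤ Lj * |q - q'| := by positivity
    nlinarith
  · intro x y q hx hy hq hxr hyr
    refine ContinuousOn.sub ?_ hγ3.continuousOn
    refine (auxPsi_contDiff κ).continuousOn.comp (f := fun θ =>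
      (1 + γ θ + x θ, deriv γ θ + y θ, Real.cot θ, m θ + j θ (x θ) + q θ)) ?_ ?_
    · exact ((continuousOn_const.add hγc.continuousOn).add hx).prodMk
        ((hγ'c.continuousOn.add hy).prodMk (hcot.prodMk ((hmc.add (hjc x hx hxr)).add hq)))
    · intro θ hθ
      exact ⟨hr.trans_le (hH θ hθ _ (hxr θ hθ)), trivial⟩
  · intro θ hθ
    have := (hkey γ ℘γ θ hθ (by simpa using hr.le)).1 (h℘ θ hθ)
    simp only [sub_self] at this
    exact this.symm

end auxiliary

/-- Implicit function theorem for the free surface: given a reference surface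
`γ` with corresponding surface pressure `℘_γ` (so that `𝔽(γ, ℘_γ) = 0`),
every sufficiently small (in supremum norm) perturbation `℘` of `℘_γ`
determines a unique free surface `h` close to `γ` in `C²` with
`h(π/2) = γ(π/2)`, `h'(π/2) = γ'(π/2)` and `𝔽(h, ℘) = 0`; moreover the
solution map `℘ ↦ h` sends `℘_γ` to `γ` and is continuous from the supremum
norm to the `C²` norm. -/
theorem free_surface_exists_uniquely
    (g R σ Patm a b : ℝ)
    (hg : 0 < g) (hR : 0 < R) (hσ : 0 < σ) (hP : 0 < Patm) (ha : 0 < a)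
    (ρ ρθ : ℝ → ℝ → ℝ)
    (hρ : ContDiffOn ℝ 2 (fun q : ℝ × ℝ => ρ q.1 q.2)
      (Set.Ioi 0 ×ˢ Set.Ioo 0 Real.pi))
    (hρθ : ∀ r ∈ Set.Ioi (0:ℝ), ∀ t ∈ Set.Ioo 0 Real.pi,
      HasDerivAt (fun u => ρ r u) (ρθ r t) t)
    (F : ℝ → ℝ) (hF : ContDiffOn ℝ 1 F (Set.Ioi 0))
    (γ : ℝ → ℝ) (hγ : ContDiff ℝ 2 γ)
    (hγpos : ∀ θ ∈ Istrip, 0 < 1 + γ θ)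
    (℘γ : ℝ → ℝ) (h℘cont : ContinuousOn ℘γ Istrip)
    (h℘ : ∀ θ ∈ Istrip, FF g R σ Patm a b ρ ρθ F γ ℘γ θ = 0) :
    ∃ δ > (0:ℝ), ∃ η > (0:ℝ), ∃ S : (ℝ → ℝ) → (ℝ → ℝ),
      (∀ ℘ : ℝ → ℝ, ContinuousOn ℘ Istrip →
        (∀ θ ∈ Istrip, |℘ θ - ℘γ θ| < δ) →
        (ContDiff ℝ 2 (S ℘) ∧
          S ℘ (Real.pi / 2) = γ (Real.pi / 2) ∧
          deriv (S ℘) (Real.pi / 2) = deriv γ (Real.pi / 2) ∧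
          (∀ θ ∈ Istrip,
            |S ℘ θ - γ θ| + |deriv (S ℘) θ - deriv γ θ|
              + |deriv (deriv (S ℘)) θ - deriv (deriv γ) θ| < η) ∧
          (∀ θ ∈ Istrip, FF g R σ Patm a b ρ ρθ F (S ℘) ℘ θ = 0) ∧
          (∀ h : ℝ → ℝ, ContDiff ℝ 2 h →
            h (Real.pi / 2) = γ (Real.pi / 2) →
            deriv h (Real.pi / 2) = deriv γ (Real.pi / 2) →
            (∀ θ ∈ Istrip,
              |h θ - γ θ| + |deriv h θ - deriv γ θ|
                + |deriv (deriv h) θ - deriv (deriv γ) θ| < η) →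
            (∀ θ ∈ Istrip, FF g R σ Patm a b ρ ρθ F h ℘ θ = 0) →
            Set.EqOn h (S ℘) Istrip))) ∧
      Set.EqOn (S ℘γ) γ Istrip ∧
      (∀ ℘₁ : ℝ → ℝ, ContinuousOn ℘₁ Istrip →
        (∀ θ ∈ Istrip, |℘₁ θ - ℘γ θ| < δ) →
        ∀ e > (0:ℝ), ∃ d > (0:ℝ), ∀ ℘₂ : ℝ → ℝ, ContinuousOn ℘₂ Istrip →
          (∀ θ ∈ Istrip, |℘₂ θ - ℘γ θ| < δ) →
          (∀ θ ∈ Istrip, |℘₂ θ - ℘₁ θ| < d) →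
          ∀ θ ∈ Istrip,
            |S ℘₂ θ - S ℘₁ θ| + |deriv (S ℘₂) θ - deriv (S ℘₁) θ|
              + |deriv (deriv (S ℘₂)) θ - deriv (deriv (S ℘₁)) θ| < e) := by
  obtain ⟨r, L, W, hr, hL, hWlip, hWc, hW0, hkey⟩ := aux_reduction g R σ Patm a b hR hσ hP ha ρ ρθ
    hρ hρθ F hF γ hγ hγpos ℘γ h℘
  obtain ⟨C, hC, δ, hδ, hδ1, hstab, hex⟩ := aux_abstract (Real.pi / 2) 0.016 r L (by norm_num)
    (by norm_num) hr hL W hWlip hWc hW0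
  obtain ⟨hγ1, hγ2, hγ3⟩ := aux_hasDeriv_of_contDiff_two hγ
  -- stability for actual solutions
  have hst : ∀ ℘₁ ℘₂ h₁ h₂ : ℝ → ℝ,
      (∀ θ ∈ Istrip, |℘₁ θ - ℘γ θ| < δ) → (∀ θ ∈ Istrip, |℘₂ θ - ℘γ θ| < δ) →
      ContDiff ℝ 2 h₁ → ContDiff ℝ 2 h₂ →
      h₁ (Real.pi / 2) = γ (Real.pi / 2) → h₂ (Real.pi / 2) = γ (Real.pi / 2) →
      deriv h₁ (Real.pi / 2) = deriv γ (Real.pi / 2) →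
      deriv h₂ (Real.pi / 2) = deriv γ (Real.pi / 2) →
      (∀ θ ∈ Istrip, |h₁ θ - γ θ| + |deriv h₁ θ - deriv γ θ|
              + |deriv (deriv h₁) θ - deriv (deriv γ) θ| < r) →
      (∀ θ ∈ Istrip, |h₂ θ - γ θ| + |deriv h₂ θ - deriv γ θ|
              + |deriv (deriv h₂) θ - deriv (deriv γ) θ| < r) →
      (∀ θ ∈ Istrip, FF g R σ Patm a b ρ ρθ F h₁ ℘₁ θ = 0) →
      (∀ θ ∈ Istrip, FF g R σ Patm a b ρ ρθ F h₂ ℘₂ θ = 0) →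
      ∀ d, 0 ≤ d → (∀ θ ∈ Istrip, |℘₂ θ - ℘₁ θ| ≤ d) →
      ∀ θ ∈ Istrip, |h₂ θ - h₁ θ| + |deriv h₂ θ - deriv h₁ θ|
              + |deriv (deriv h₂) θ - deriv (deriv h₁) θ| ≤ C * d := by
    intro ℘₁ ℘₂ h₁ h₂ hp₁ hp₂ hh₁ hh₂ i₁ i₂ i₁' i₂' c₁ c₂ e₁ e₂ d hd hpd θ hθ
    obtain ⟨k1, k2, -⟩ := aux_hasDeriv_of_contDiff_two hh₁
    obtain ⟨l1, l2, -⟩ := aux_hasDeriv_of_contDiff_two hh₂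
    have hb : ∀ h : ℝ → ℝ, (∀ θ ∈ Istrip, |h θ - γ θ| + |deriv h θ - deriv γ θ|
              + |deriv (deriv h) θ - deriv (deriv γ) θ| < r) →
        ∀ θ ∈ Istrip, |h θ - γ θ| ≤ r ∧ |deriv h θ - deriv γ θ| ≤ r := by
      intro h hh t ht
      have := hh t ht
      have a1 := abs_nonneg (h t - γ t)
      have a2 := abs_nonneg (deriv h t - deriv γ t)
      have a3 := abs_nonneg (deriv (deriv h) t - deriv (deriv γ) t)
      exact ⟨by linarith, by linarith⟩
    have key := hstab (fun t => ℘₁ t - ℘γ t) (fun t => ℘₂ t - ℘γ t)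
      (fun t => h₁ t - γ t) (fun t => deriv h₁ t - deriv γ t)
      (fun t => deriv (deriv h₁) t - deriv (deriv γ) t)
      (fun t => h₂ t - γ t) (fun t => deriv h₂ t - deriv γ t)
      (fun t => deriv (deriv h₂) t - deriv (deriv γ) t)
      (fun t ht => (hp₁ t ht).le.trans hδ1) (fun t ht => (hp₂ t ht).le.trans hδ1)
      (fun t => (k1 t).sub (hγ1 t)) (fun t => (k2 t).sub (hγ2 t))
      (fun t => (l1 t).sub (hγ1 t)) (fun t => (l2 t).sub (hγ2 t))
      (by simp only [i₁, i₂]) (by simp only [i₁', i₂'])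
      (hb h₁ c₁) (hb h₂ c₂)
      (fun t ht => (hkey h₁ ℘₁ t ht (hb h₁ c₁ t ht).1).1 (e₁ t ht))
      (fun t ht => (hkey h₂ ℘₂ t ht (hb h₂ c₂ t ht).1).1 (e₂ t ht))
      d hd (fun t ht => by simpa using hpd t ht) θ hθ
    simpa using key
  -- existence
  have hexist : ∀ ℘ : ℝ → ℝ, ∃ h : ℝ → ℝ, ContinuousOn ℘ Istrip →
      (∀ θ ∈ Istrip, |℘ θ - ℘γ θ| < δ) →
      (ContDiff ℝ 2 h ∧
          h (Real.pi / 2) = γ (Real.pi / 2) ∧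
          deriv h (Real.pi / 2) = deriv γ (Real.pi / 2) ∧
          (∀ θ ∈ Istrip,
            |h θ - γ θ| + |deriv h θ - deriv γ θ|
              + |deriv (deriv h) θ - deriv (deriv γ) θ| < r) ∧
          (∀ θ ∈ Istrip, FF g R σ Patm a b ρ ρθ F h ℘ θ = 0)) := by
    intro ℘
    by_cases hyp : ContinuousOn ℘ Istrip ∧ (∀ θ ∈ Istrip, |℘ θ - ℘γ θ| < δ)
    · obtain ⟨x, y, z, hz, hx, hy, hx0, hy0, hsm, heq⟩ :=
        hex (fun θ => ℘ θ - ℘γ θ) (hyp.1.sub h℘cont) hyp.2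
      have hd1 : ∀ t, HasDerivAt (fun t => γ t + x t) (deriv γ t + y t) t := fun t =>
        (hγ1 t).add (hx t)
      have hd2 : ∀ t, HasDerivAt (fun t => deriv γ t + y t) (deriv (deriv γ) t + z t) t :=
        fun t => (hγ2 t).add (hy t)
      have hD1 : deriv (fun t => γ t + x t) = fun t => deriv γ t + y t :=
        funext fun t => (hd1 t).deriv
      have hD2 : deriv (fun t => deriv γ t + y t) = fun t => deriv (deriv γ) t + z t :=
        funext fun t => (hd2 t).deriv
      refine ⟨fun t => γ t + x t, fun _ _ => ⟨aux_contDiff_two hd1 hd2 (hγ3.add hz), ?_, ?_, ?_, ?_⟩⟩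
      · simp [hx0]
      · rw [hD1]; simp [hy0]
      · intro θ hθ
        rw [hD1, hD2]
        simpa using hsm θ hθ
      · intro θ hθ
        have hs := hsm θ hθ
        rw [hkey _ _ θ hθ (by
          simp only [add_sub_cancel_left]
          linarith [abs_nonneg (y θ), abs_nonneg (z θ)]), hD1, hD2]
        simpa using heq θ hθ
    · exact ⟨γ, fun h1 h2 => absurd ⟨h1, h2⟩ hyp⟩
  choose S hS using hexist
  have hγδ : ∀ θ ∈ Istrip, |℘γ θ - ℘γ θ| < δ := fun θ _ => by simpa using hδ
  have huniq : ∀ ℘ : ℝ → ℝ, ContinuousOn ℘ Istrip → (∀ θ ∈ Istrip, |℘ θ - ℘γ θ| < δ) →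
      (∀ h : ℝ → ℝ, ContDiff ℝ 2 h →
            h (Real.pi / 2) = γ (Real.pi / 2) →
            deriv h (Real.pi / 2) = deriv γ (Real.pi / 2) →
            (∀ θ ∈ Istrip,
              |h θ - γ θ| + |deriv h θ - deriv γ θ|
                + |deriv (deriv h) θ - deriv (deriv γ) θ| < r) →
            (∀ θ ∈ Istrip, FF g R σ Patm a b ρ ρθ F h ℘ θ = 0) →
            Set.EqOn h (S ℘) Istrip) := by
    intro ℘ hc hp h h1 h2 h3 h4 h5 θ hθ
    obtain ⟨s1, s2, s3, s4, s5⟩ := hS ℘ hc hp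
    have key := hst ℘ ℘ (S ℘) h hp hp s1 h1 s2 h2 s3 h3 s4 h4 s5 h5 0 le_rfl
      (fun t _ => by simp) θ hθ
    have a1 := abs_nonneg (h θ - S ℘ θ)
    have a2 := abs_nonneg (deriv h θ - deriv (S ℘) θ)
    have a3 := abs_nonneg (deriv (deriv h) θ - deriv (deriv (S ℘)) θ)
    have : |h θ - S ℘ θ| = 0 := by linarith
    exact sub_eq_zero.1 (abs_eq_zero.1 this)
  refine ⟨δ, hδ, r, hr, S, ?_, ?_, ?_⟩
  · intro ℘ hc hp
    obtain ⟨s1, s2, s3, s4, s5⟩ := hS ℘ hc hp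
    exact ⟨s1, s2, s3, s4, s5, huniq ℘ hc hp⟩
  · exact (huniq ℘γ h℘cont hγδ γ hγ rfl rfl (fun θ _ => by simpa using hr) h℘).symm
  · intro ℘₁ hc₁ hp₁ e he
    refine ⟨e / (2 * C), by positivity, ?_⟩
    intro ℘₂ hc₂ hp₂ hd θ hθ
    obtain ⟨s1, s2, s3, s4, s5⟩ := hS ℘₁ hc₁ hp₁
    obtain ⟨t1, t2, t3, t4, t5⟩ := hS ℘₂ hc₂ hp₂
    have key := hst ℘₁ ℘₂ (S ℘₁) (S ℘₂) hp₁ hp₂ s1 t1 s2 t2 s3 t3 s4 t4 s5 t5 (e / (2 * C))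
      (by positivity) (fun t ht => (hd t ht).le) θ hθ
    have : C * (e / (2 * C)) = e / 2 := by field_simp
    linarith
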